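/- Let t* > 0, R > 0, T > 0 with √12 (T+t*)^{1/3} < R, let x₀ satisfy x₀² < 12 t*^{2/3}, let B be the Barenblatt function B(x,t) = 2(t+t*)^{-1/3} · max(0, 1 − (x²/12)(t+t*)^{-2/3}), let η(t) = x₀((t+t*)/t*)^{1/3}, and let G(x,t) = −x/(3(t+t*)) if x² < 12(t+t*)^{2/3} and G(x,t) = 0 otherwise. Define u₁(x,t) = B(x,t) if x > η(t) and u₁(x,t) = 0 otherwise, and u₂(x,t) = B(x,t) − u₁(x,t). Then u₁ + u₂ = B on [−R,R] × [0,T], and for each i ∈ {1,2} and every continuously differentiable function φ : [−R,R] × [0,T] → ℝ, ∫_{−R}^{R} u_i(x,T) φ(x,T) dx − ∫_{−R}^{R} u_i(x,0) φ(x,0) dx − ∫₀^T ∫_{−R}^{R} u_i(x,t) ( ∂_t φ(x,t) − G(x,t) ∂_x φ(x,t) ) dx dt = 0. -/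

import Mathlib

open Set intervalIntegral

/-- The Barenblatt solution of the porous medium equation. -/
noncomputable def barenblatt (ts x t : ℝ) : ℝ :=
  2 * (t + ts) ^ (-(1:ℝ)/3) * max 0 (1 - x ^ 2 / 12 * (t + ts) ^ (-(2:ℝ)/3))

/-- The velocity field `G(x,t) = -x/(3(t+t*))` inside the support of the Barenblatt
solution and `0` outside; it is an a.e. version of `∂_x B`. -/
noncomputable def Gvel (ts x t : ℝ) : ℝ :=
  if x ^ 2 < 12 * (t + ts) ^ ((2:ℝ)/3) then -x / (3 * (t + ts)) else 0

/-!
With `l(t) = (t + t*)^{1/3}` the Barenblatt solution is self-similar, `B(x, t) = l⁻¹ P(x / l)`, and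
the velocity on its support is `-G(x, t) = (l' / l) x`, whose flow consists of the dilations
`y ↦ l y`. The interface `η` is the trajectory of a single point under this flow, so `B` restricted
to either side of it is again of the form `l⁻¹ F(x / l)`, where `F` is `P` cut off at a fixed point.
For any such `u`, substituting `x = l y` gives `∫ u φ dx = ∫ F(y) φ(l y, t) dy`; the time derivative
of `φ(l y, t)` is `φt - G φx` along the flow, so the weak formulation is the fundamental theorem of
calculus in `t`, integrated against `F` and combined with Fubini.
-/

open MeasureTheory Topology

/-- A `C¹` test function `φ` on the closed rectangle `[-R, R] × [0, T]`, together with its partial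
derivatives `φx`, `φt`: these are required to be derivatives only in the open rectangle, and to
extend continuously to the closed one. -/
structure IsTestFunction (R T : ℝ) (φ φx φt : ℝ → ℝ → ℝ) : Prop where
  hasDerivAt_fst : ∀ x ∈ Ioo (-R) R, ∀ t ∈ Ioo 0 T, HasDerivAt (fun x' => φ x' t) (φx x t) x
  hasDerivAt_snd : ∀ x ∈ Ioo (-R) R, ∀ t ∈ Ioo 0 T, HasDerivAt (fun t' => φ x t') (φt x t) t
  continuousOn : ContinuousOn (fun p : ℝ × ℝ => φ p.1 p.2) (Icc (-R) R ×ˢ Icc 0 T)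
  continuousOn_fst : ContinuousOn (fun p : ℝ × ℝ => φx p.1 p.2) (Icc (-R) R ×ˢ Icc 0 T)
  continuousOn_snd : ContinuousOn (fun p : ℝ × ℝ => φt p.1 p.2) (Icc (-R) R ×ˢ Icc 0 T)

/-- Weak solutions of `∂_t u = ∂_x (u G)` on `(-R, R) × (0, T)` with no-flux boundary conditions,
the initial and final values being those of `u` itself. -/
def IsWeakSolution (R T : ℝ) (G u : ℝ → ℝ → ℝ) : Prop :=
  ∀ φ φx φt, IsTestFunction R T φ φx φt →
    (∫ x in (-R)..R, u x T * φ x T) - (∫ x in (-R)..R, u x 0 * φ x 0)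
      - (∫ t in (0 : ℝ)..T, ∫ x in (-R)..R, u x t * (φt x t - G x t * φx x t)) = 0

section Calculus

variable {E : Type*} [NormedAddCommGroup E] [NormedSpace ℝ E]

theorem hasDerivAt_comp_curve_of_partials {φ φx φt : ℝ → ℝ → E} {X : ℝ → ℝ} {X' t : ℝ}
    (hφx : ∀ᶠ p in 𝓝 (X t, t), HasDerivAt (fun x => φ x p.2) (φx p.1 p.2) p.1)
    (hφt : ∀ᶠ p in 𝓝 (X t, t), HasDerivAt (fun s => φ p.1 s) (φt p.1 p.2) p.2)
    (hφxc : ContinuousAt (fun p : ℝ × ℝ => φx p.1 p.2) (X t, t))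
    (hφtc : ContinuousAt (fun p : ℝ × ℝ => φt p.1 p.2) (X t, t))
    (hX : HasDerivAt X X' t) :
    HasDerivAt (fun s => φ (X s) s) (X' • φx (X t) t + φt (X t) t) t := by
  let L : E ≃L[ℝ] (ℝ →L[ℝ] E) := ContinuousLinearMap.toSpanSingletonCLE
  have hφ := hasStrictFDerivAt_uncurry_coprod (𝕜 := ℝ) (u := (X t, t)) (f := φ)
    (f₁ := fun x s => L (φx x s)) (f₂ := fun x s => L (φt x s))
    (hφx.mono fun _ h => h.hasFDerivAt) (hφt.mono fun _ h => h.hasFDerivAt)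
    (L.continuous.continuousAt.comp hφxc) (L.continuous.continuousAt.comp hφtc)
  have hcurve : HasDerivAt (fun s => (X s, s)) (X', 1) t := hX.prodMk (hasDerivAt_id t)
  simpa [L, Function.HasUncurry.uncurry, Function.comp_def] using
    hφ.hasFDerivAt.comp_hasDerivAt (f := fun s => (X s, s)) t hcurve

theorem integral_sub_eq_integral_integral_of_hasDerivAt [CompleteSpace E]
    {α : Type*} [MeasurableSpace α] {μ : Measure α} [SFinite μ] {a b : ℝ} (hab : a ≤ b)
    {f f' : α → ℝ → E} (hf : ∀ᵐ y ∂μ, ContinuousOn (f y) (Icc a b))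
    (hderiv : ∀ᵐ y ∂μ, ∀ t ∈ Ioo a b, HasDerivAt (f y) (f' y t) t)
    (hfa : Integrable (fun y => f y a) μ) (hfb : Integrable (fun y => f y b) μ)
    (hf' : Integrable (Function.uncurry f') (μ.prod (volume.restrict (Icc a b)))) :
    (∫ y, f y b ∂μ) - ∫ y, f y a ∂μ = ∫ t in a..b, ∫ y, f' y t ∂μ := by
  rw [← integral_sub hfb hfa, intervalIntegral.integral_of_le hab, ← integral_Icc_eq_integral_Ioc,
    ← integral_integral_swap hf']
  refine integral_congr_ae ?_
  filter_upwards [hf, hderiv, hf'.prod_right_ae] with y hy hy' hint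
  rw [integral_Icc_eq_integral_Ioc, ← intervalIntegral.integral_of_le hab]
  exact (integral_eq_sub_of_hasDerivAt_of_le hab hy hy'
    ((intervalIntegrable_iff_integrableOn_Icc_of_le hab).2 hint)).symm

end Calculus

theorem integrable_prod_mul_of_continuousOn {α β : Type*}
    [TopologicalSpace α] [T2Space α] [MeasurableSpace α] [OpensMeasurableSpace α]
    [TopologicalSpace β] [T2Space β] [MeasurableSpace β] [OpensMeasurableSpace β]
    [SecondCountableTopologyEither α β] {μ : Measure α} {ν : Measure β} [SFinite μ] [SFinite ν]
    [IsFiniteMeasureOnCompacts ν] {F : α → ℝ} {g : α × β → ℝ} {K : Set α} {L : Set β}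
    (hK : IsCompact K) (hL : IsCompact L) (hF : IntegrableOn F K μ)
    (hg : ContinuousOn g (K ×ˢ L)) :
    Integrable (fun p : α × β => F p.1 * g p) ((μ.restrict K).prod (ν.restrict L)) := by
  have : IsFiniteMeasure (ν.restrict L) := ⟨by simpa using hL.measure_lt_top⟩
  have hfst : IntegrableOn (fun p : α × β => F p.1) (K ×ˢ L) (μ.prod ν) := by
    simpa only [IntegrableOn, ← Measure.prod_restrict] using hF.comp_fst (ν.restrict L)
  simpa only [IntegrableOn, ← Measure.prod_restrict]
    using hfst.mul_continuousOn hg (hK.prod hL)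

theorem integral_rescale_mul {F g : ℝ → ℝ} {K : Set ℝ} {b c l : ℝ} (hl : 0 < l)
    (hFK : Function.support F ⊆ K) (hFl : ∀ y ∈ Function.support F, l * y ∈ Ioc b c) :
    ∫ x in b..c, l⁻¹ * F (x / l) * g x = ∫ y in K, F y * g (l * y) := by
  have hcancel (x : ℝ) : l * (x / l) = x := mul_div_cancel₀ x hl.ne'
  calc ∫ x in b..c, l⁻¹ * F (x / l) * g x
      = ∫ x, l⁻¹ * F (x / l) * g x := by
        refine integral_eq_integral_of_support_subset fun x hx => ?_
        rw [← hcancel x]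
        exact hFl _ (right_ne_zero_of_mul (left_ne_zero_of_mul hx))
    _ = ∫ x, l⁻¹ * (F (x / l) * g (l * (x / l))) := by simp only [hcancel, mul_assoc]
    _ = ∫ y, F y * g (l * y) := by
        rw [MeasureTheory.integral_const_mul,
          Measure.integral_comp_div (fun y => F y * g (l * y)), smul_eq_mul, abs_of_pos hl,
          inv_mul_cancel_left₀ hl.ne']
    _ = ∫ y in K, F y * g (l * y) := by
        refine (setIntegral_eq_integral_of_forall_compl_eq_zero fun y hy => ?_).symm
        rw [Function.notMem_support.1 fun h => hy (hFK h), zero_mul]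

section SelfSimilar

variable {R T a : ℝ} {l l' : ℝ → ℝ}

theorem mapsTo_dilation (hl0 : ∀ t ∈ Icc 0 T, 0 ≤ l t) (hlR : ∀ t ∈ Icc 0 T, l t * a ≤ R) :
    MapsTo (fun p : ℝ × ℝ => (l p.2 * p.1, p.2)) (Icc (-a) a ×ˢ Icc 0 T)
      (Icc (-R) R ×ˢ Icc 0 T) := by
  rintro ⟨y, t⟩ ⟨hy, ht⟩
  refine ⟨abs_le.1 ?_, ht⟩
  rw [abs_mul, abs_of_nonneg (hl0 t ht)]
  exact (mul_le_mul_of_nonneg_left (abs_le.2 hy) (hl0 t ht)).trans (hlR t ht)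

theorem mul_mem_Ioo_of_mul_le {r y : ℝ} (hr : 0 < r) (hrR : r * a ≤ R) (hy : y ∈ Ioo (-a) a) :
    r * y ∈ Ioo (-R) R := by
  rw [mem_Ioo, ← abs_lt, abs_mul, abs_of_pos hr]
  exact (mul_lt_mul_of_pos_left (abs_lt.2 hy) hr).trans_le hrR

theorem IsTestFunction.hasDerivAt_comp_curve {φ φx φt : ℝ → ℝ → ℝ}
    (hφ : IsTestFunction R T φ φx φt) {X : ℝ → ℝ} {X' t : ℝ} (ht : t ∈ Ioo 0 T)
    (hXt : X t ∈ Ioo (-R) R) (hX : HasDerivAt X X' t) :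
    HasDerivAt (fun s => φ (X s) s) (X' * φx (X t) t + φt (X t) t) t := by
  have hopen : Ioo (-R) R ×ˢ Ioo 0 T ∈ 𝓝 (X t, t) :=
    (isOpen_Ioo.prod isOpen_Ioo).mem_nhds ⟨hXt, ht⟩
  have hclosed := Filter.mem_of_superset hopen (prod_mono Ioo_subset_Icc_self Ioo_subset_Icc_self)
  exact hasDerivAt_comp_curve_of_partials
    (Filter.mem_of_superset hopen fun p hp => hφ.hasDerivAt_fst p.1 hp.1 p.2 hp.2)
    (Filter.mem_of_superset hopen fun p hp => hφ.hasDerivAt_snd p.1 hp.1 p.2 hp.2)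
    (hφ.continuousOn_fst.continuousAt hclosed) (hφ.continuousOn_snd.continuousAt hclosed) hX

theorem integral_profile_sub_eq_integral_integral (hT : 0 ≤ T)
    (hl0 : ∀ t ∈ Icc 0 T, 0 < l t) (hlR : ∀ t ∈ Icc 0 T, l t * a ≤ R)
    (hlc : ContinuousOn l (Icc 0 T)) (hl'c : ContinuousOn l' (Icc 0 T))
    (hl : ∀ t ∈ Ioo 0 T, HasDerivAt l (l' t) t)
    {F : ℝ → ℝ} (hF : IntegrableOn F (Icc (-a) a)) (hFa : Function.support F ⊆ Ioo (-a) a)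
    {φ φx φt : ℝ → ℝ → ℝ} (hφ : IsTestFunction R T φ φx φt) :
    (∫ y in Icc (-a) a, F y * φ (l T * y) T) - ∫ y in Icc (-a) a, F y * φ (l 0 * y) 0 =
      ∫ t in (0 : ℝ)..T, ∫ y in Icc (-a) a,
        F y * (l' t * y * φx (l t * y) t + φt (l t * y) t) := by
  have hmaps := mapsTo_dilation (fun t ht => (hl0 t ht).le) hlR
  have hdil : ContinuousOn (fun p : ℝ × ℝ => (l p.2 * p.1, p.2)) (Icc (-a) a ×ˢ Icc 0 T) :=
    ((hlc.comp continuousOn_snd fun _ hp => hp.2).mul continuousOn_fst).prodMk continuousOn_snd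
  have hψ : ContinuousOn (fun p : ℝ × ℝ => φ (l p.2 * p.1) p.2) (Icc (-a) a ×ˢ Icc 0 T) :=
    hφ.continuousOn.comp hdil hmaps
  have hψ' : ContinuousOn (fun p : ℝ × ℝ => l' p.2 * p.1 * φx (l p.2 * p.1) p.2 +
      φt (l p.2 * p.1) p.2) (Icc (-a) a ×ˢ Icc 0 T) :=
    (((hl'c.comp continuousOn_snd fun _ hp => hp.2).mul continuousOn_fst).mul
      (hφ.continuousOn_fst.comp hdil hmaps)).add (hφ.continuousOn_snd.comp hdil hmaps)
  have hslice (t : ℝ) (ht : t ∈ Icc 0 T) :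
      IntegrableOn (fun y => F y * φ (l t * y) t) (Icc (-a) a) :=
    hF.mul_continuousOn (hψ.comp (Continuous.prodMk_left t).continuousOn fun _ hy => ⟨hy, ht⟩)
      isCompact_Icc
  refine integral_sub_eq_integral_integral_of_hasDerivAt (f := fun y t => F y * φ (l t * y) t) hT
    ?_ (.of_forall fun y t ht => ?_) (hslice 0 ⟨le_rfl, hT⟩) (hslice T ⟨hT, le_rfl⟩)
    (integrable_prod_mul_of_continuousOn isCompact_Icc isCompact_Icc hF hψ')
  · refine ae_restrict_of_forall_mem measurableSet_Icc fun y hy => ?_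
    exact continuousOn_const.mul
      (hψ.comp (Continuous.prodMk_right y).continuousOn fun _ ht => ⟨hy, ht⟩)
  · by_cases hy : F y = 0
    · simpa [hy] using hasDerivAt_const t (0 : ℝ)
    have htIcc := Ioo_subset_Icc_self ht
    exact (hφ.hasDerivAt_comp_curve (X := fun s => l s * y) ht
      (mul_mem_Ioo_of_mul_le (hl0 t htIcc) (hlR t htIcc) (hFa hy))
      ((hl t ht).mul_const y)).const_mul (F y)

theorem isWeakSolution_of_selfSimilar (hT : 0 ≤ T)
    (hl0 : ∀ t ∈ Icc 0 T, 0 < l t) (hlR : ∀ t ∈ Icc 0 T, l t * a ≤ R)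
    (hlc : ContinuousOn l (Icc 0 T)) (hl'c : ContinuousOn l' (Icc 0 T))
    (hl : ∀ t ∈ Ioo 0 T, HasDerivAt l (l' t) t)
    {F : ℝ → ℝ} (hF : IntegrableOn F (Icc (-a) a)) (hFa : Function.support F ⊆ Ioo (-a) a)
    {G u : ℝ → ℝ → ℝ}
    (hG : ∀ t ∈ Icc 0 T, ∀ y ∈ Function.support F, G (l t * y) t = -(l' t * y))
    (hu : ∀ x, ∀ t ∈ Icc 0 T, u x t = (l t)⁻¹ * F (x / l t)) :
    IsWeakSolution R T G u := by
  intro φ φx φt hφ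
  have hrescale (t : ℝ) (ht : t ∈ Icc 0 T) (g : ℝ → ℝ) :
      ∫ x in (-R)..R, u x t * g x = ∫ y in Icc (-a) a, F y * g (l t * y) := by
    simp only [hu _ t ht]
    exact integral_rescale_mul (hl0 t ht) (hFa.trans Ioo_subset_Icc_self) fun y hy =>
      Ioo_subset_Ioc_self (mul_mem_Ioo_of_mul_le (hl0 t ht) (hlR t ht) (hFa hy))
  rw [hrescale T ⟨hT, le_rfl⟩ (φ · T), hrescale 0 ⟨le_rfl, hT⟩ (φ · 0),
    integral_profile_sub_eq_integral_integral hT hl0 hlR hlc hl'c hl hF hFa hφ, sub_eq_zero]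
  refine integral_congr fun t ht => ?_
  rw [uIcc_of_le hT] at ht
  simp only [hrescale t ht fun x => φt x t - G x t * φx x t]
  refine integral_congr_ae (.of_forall fun y => ?_)
  by_cases hy : F y = 0
  · simp only [hy, zero_mul]
  · simp only [hG t ht y hy]
    ring

end SelfSimilar

section Barenblatt

/-- The profile `P` of the Barenblatt solution, for which
`B(x, t) = (t + t*)^{-1/3} P(x / (t + t*)^{1/3})`. -/
noncomputable def barenblattProfile (y : ℝ) : ℝ :=
  2 * max 0 (1 - y ^ 2 / 12)

theorem continuous_barenblattProfile : Continuous barenblattProfile := by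
  unfold barenblattProfile
  fun_prop

theorem support_barenblattProfile_subset :
    Function.support barenblattProfile ⊆ Ioo (-√12) √12 := by
  intro y hy
  rw [mem_Ioo, ← Real.sq_lt]
  contrapose! hy
  rw [Function.notMem_support, barenblattProfile, max_eq_left (by linarith), mul_zero]

theorem rpow_two_thirds_eq {s : ℝ} (hs : 0 ≤ s) : s ^ ((2 : ℝ) / 3) = (s ^ ((1 : ℝ) / 3)) ^ 2 := by
  rw [← Real.rpow_mul_natCast hs]
  norm_num

theorem hasDerivAt_add_const_rpow {c t : ℝ} (h : t + c ≠ 0) (p : ℝ) :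
    HasDerivAt (fun t => (t + c) ^ p) (p / (t + c) * (t + c) ^ p) t := by
  refine (((hasDerivAt_id' t).add_const c).rpow_const (Or.inl h)).congr_deriv ?_
  rw [Real.rpow_sub_one h]
  ring

theorem barenblatt_eq_profile {ts t : ℝ} (h : 0 < t + ts) (x : ℝ) :
    barenblatt ts x t =
      ((t + ts) ^ ((1 : ℝ) / 3))⁻¹ * barenblattProfile (x / (t + ts) ^ ((1 : ℝ) / 3)) := by
  rw [barenblatt, barenblattProfile, neg_div, neg_div, Real.rpow_neg h.le, Real.rpow_neg h.le,
    rpow_two_thirds_eq h.le, div_pow, div_right_comm, div_eq_mul_inv _ (_ ^ 2), ← mul_assoc,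
    mul_comm 2]

theorem Gvel_rpow_mul {ts t y : ℝ} (h : 0 < t + ts) (hy : y ∈ Ioo (-√12) √12) :
    Gvel ts ((t + ts) ^ ((1 : ℝ) / 3) * y) t =
      -(1 / 3 / (t + ts) * (t + ts) ^ ((1 : ℝ) / 3) * y) := by
  have hinside : ((t + ts) ^ ((1 : ℝ) / 3) * y) ^ 2 < 12 * (t + ts) ^ ((2 : ℝ) / 3) := by
    rw [rpow_two_thirds_eq h.le, mul_pow, mul_comm]
    exact mul_lt_mul_of_pos_right (Real.sq_lt.2 hy) (by positivity)
  rw [Gvel, if_pos hinside]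
  field_simp

theorem interface_lt_iff {ts t : ℝ} (hts : 0 ≤ ts) (h : 0 < t + ts) (x₀ x : ℝ) :
    x₀ * ((t + ts) / ts) ^ ((1 : ℝ) / 3) < x ↔
      x₀ / ts ^ ((1 : ℝ) / 3) < x / (t + ts) ^ ((1 : ℝ) / 3) := by
  rw [lt_div_iff₀ (Real.rpow_pos_of_pos h _), Real.div_rpow h.le hts, mul_div_assoc',
    div_mul_eq_mul_div]

theorem isWeakSolution_barenblatt_indicator {ts R T : ℝ} (hts : 0 < ts) (hT : 0 ≤ T)
    (hRT : √12 * (T + ts) ^ ((1 : ℝ) / 3) ≤ R) {A : Set ℝ} (hA : MeasurableSet A)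
    {u : ℝ → ℝ → ℝ} (hu : ∀ x, ∀ t ∈ Icc 0 T,
      u x t = A.indicator (fun _ => barenblatt ts x t) (x / (t + ts) ^ ((1 : ℝ) / 3))) :
    IsWeakSolution R T (Gvel ts) u := by
  have hpos (t : ℝ) (ht : t ∈ Icc 0 T) : 0 < t + ts := by linarith [ht.1]
  have hl (t : ℝ) (ht : t ∈ Icc 0 T) := hasDerivAt_add_const_rpow (hpos t ht).ne' (1 / 3)
  have hlc : ContinuousOn (fun t => (t + ts) ^ ((1 : ℝ) / 3)) (Icc 0 T) :=
    fun t ht => (hl t ht).continuousAt.continuousWithinAt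
  have hlR (t : ℝ) (ht : t ∈ Icc 0 T) : (t + ts) ^ ((1 : ℝ) / 3) * √12 ≤ R := by
    have := hpos t ht
    rw [mul_comm]
    exact hRT.trans' (by gcongr; exact ht.2)
  have hsupp : Function.support (A.indicator barenblattProfile) ⊆ Ioo (-√12) √12 :=
    support_indicator.trans_subset
      (inter_subset_right.trans support_barenblattProfile_subset)
  refine isWeakSolution_of_selfSimilar (F := A.indicator barenblattProfile) hT
    (fun t ht => Real.rpow_pos_of_pos (hpos t ht) _) hlR hlc
    ((continuousOn_const.div (by fun_prop) fun t ht => (hpos t ht).ne').mul hlc)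
    (fun t ht => hl t (Ioo_subset_Icc_self ht))
    ((continuous_barenblattProfile.integrableOn_Icc).indicator hA) hsupp
    (fun t ht y hy => Gvel_rpow_mul (hpos t ht) (hsupp hy)) fun x t ht => ?_
  rw [hu x t ht]
  simp only [indicator, barenblatt_eq_profile (hpos t ht)]
  split_ifs <;> simp

end Barenblatt

theorem segregated_weak_solution_general {ts R T : ℝ} (hts : 0 < ts) (hT : 0 ≤ T)
    (hRT : √12 * (T + ts) ^ ((1 : ℝ) / 3) ≤ R) {A : Set ℝ} (hA : MeasurableSet A)
    {u₁ u₂ : ℝ → ℝ → ℝ}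
    (hu₁ : ∀ x, ∀ t ∈ Icc 0 T,
      u₁ x t = A.indicator (fun _ => barenblatt ts x t) (x / (t + ts) ^ ((1 : ℝ) / 3)))
    (hu₂ : ∀ x, ∀ t ∈ Icc 0 T, u₂ x t = barenblatt ts x t - u₁ x t) :
    (∀ x, ∀ t ∈ Icc 0 T, u₁ x t + u₂ x t = barenblatt ts x t) ∧
      ∀ u ∈ ({u₁, u₂} : Set (ℝ → ℝ → ℝ)), IsWeakSolution R T (Gvel ts) u := by
  refine ⟨fun x t ht => by rw [hu₂ x t ht, add_sub_cancel], ?_⟩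
  rintro u (rfl | rfl)
  · exact isWeakSolution_barenblatt_indicator hts hT hRT hA hu₁
  · refine isWeakSolution_barenblatt_indicator hts hT hRT hA.compl fun x t ht => ?_
    rw [hu₂ x t ht, hu₁ x t ht, indicator_compl, Pi.sub_apply]

/-- The segregated pair `u₁ = 1_{x > η(t)} B`, `u₂ = 1_{x < η(t)} B` built from the
Barenblatt solution and the contact-inhibition trajectory `η` satisfies `u₁ + u₂ = B` and
is a weak solution of `∂_t u_i = ∂_x (u_i ∂_x (u₁ + u₂))` on `(-R,R) × (0,T)` with
no-flux boundary conditions, tested against `C¹` test functions. -/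
theorem segregated_weak_solution
    (ts R T x₀ : ℝ) (hts : 0 < ts) (hR : 0 < R) (hT : 0 < T)
    (hRT : Real.sqrt 12 * (T + ts) ^ ((1:ℝ)/3) < R)
    (hx₀ : x₀ ^ 2 < 12 * ts ^ ((2:ℝ)/3))
    (η : ℝ → ℝ) (hη : ∀ t, η t = x₀ * ((t + ts) / ts) ^ ((1:ℝ)/3))
    (u₁ u₂ : ℝ → ℝ → ℝ)
    (hu₁ : ∀ x t, u₁ x t = if η t < x then barenblatt ts x t else 0)
    (hu₂ : ∀ x t, u₂ x t = barenblatt ts x t - u₁ x t)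
    (φ φx φt : ℝ → ℝ → ℝ)
    (hφx : ∀ x ∈ Icc (-R) R, ∀ t ∈ Icc (0:ℝ) T,
      HasDerivAt (fun x' => φ x' t) (φx x t) x)
    (hφt : ∀ x ∈ Icc (-R) R, ∀ t ∈ Icc (0:ℝ) T,
      HasDerivAt (fun t' => φ x t') (φt x t) t)
    (hφc : ContinuousOn (fun p : ℝ × ℝ => φ p.1 p.2) (Icc (-R) R ×ˢ Icc (0:ℝ) T))
    (hφxc : ContinuousOn (fun p : ℝ × ℝ => φx p.1 p.2) (Icc (-R) R ×ˢ Icc (0:ℝ) T))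
    (hφtc : ContinuousOn (fun p : ℝ × ℝ => φt p.1 p.2) (Icc (-R) R ×ˢ Icc (0:ℝ) T)) :
    (∀ x ∈ Icc (-R) R, ∀ t ∈ Icc (0:ℝ) T,
      u₁ x t + u₂ x t = barenblatt ts x t) ∧
    (∀ u ∈ ({u₁, u₂} : Set (ℝ → ℝ → ℝ)),
      (∫ x in (-R)..R, u x T * φ x T) - (∫ x in (-R)..R, u x 0 * φ x 0)
        - (∫ t in (0:ℝ)..T, ∫ x in (-R)..R,
            u x t * (φt x t - Gvel ts x t * φx x t)) = 0) := by
  obtain ⟨hsum, hweak⟩ := segregated_weak_solution_general (u₁ := u₁) hts hT.le hRT.le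
    (measurableSet_Ioi (a := x₀ / ts ^ ((1 : ℝ) / 3))) (fun x t ht => by
      simp only [hu₁, hη, interface_lt_iff hts.le (add_pos_of_nonneg_of_pos ht.1 hts) x₀ x,
        indicator, mem_Ioi]) fun x t _ => hu₂ x t
  exact ⟨fun x _ => hsum x, fun u hu => hweak u hu φ φx φt
    ⟨fun x hx t ht => hφx x (Ioo_subset_Icc_self hx) t (Ioo_subset_Icc_self ht),
      fun x hx t ht => hφt x (Ioo_subset_Icc_self hx) t (Ioo_subset_Icc_self ht), hφc, hφxc, hφtc⟩⟩
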